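/- arXiv:2107.07622 — 2 statements merged into one kernel-verified Lean document; each statement's English description precedes it below -/
import Mathlib

section
/- Let A ∈ ℂ^{n×n} be a Hermitian positive-definite matrix. Then Tr(A⁻¹) ≥ Σ_{i=1}^{n} (A_{ii})⁻¹, where each diagonal entry A_{ii} is a positive real number. Moreover, equality holds if and only if A is a diagonal matrix. -/
open Matrix ComplexOrder

/-!
For a fixed index `i`, the vector `v = A⁻¹ eᵢ - (Aᵢᵢ)⁻¹ eᵢ` is chosen so that `A v` vanishes at `i`.
Hence `v* A v = (A⁻¹ eᵢ)* A v = vᵢ = (A⁻¹)ᵢᵢ - (Aᵢᵢ)⁻¹`, which is nonnegative, and zero only if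
`v = 0`, that is, only if `A eᵢ` is a multiple of `eᵢ`. Sum over `i`.
-/

section InvColResidual

variable {n K : Type*} [Fintype n] [DecidableEq n] [Field K] {A : Matrix n n K} {i : n}

/-- The vector `A⁻¹ eᵢ - (Aᵢᵢ)⁻¹ eᵢ`, the error made in column `i` when `A⁻¹` is approximated by
the inverse of the diagonal of `A`. Its `A`-energy is the gap between `(A⁻¹)ᵢᵢ` and `(Aᵢᵢ)⁻¹`. -/
noncomputable def invColResidual (A : Matrix n n K) (i : n) : n → K :=
  A⁻¹.col i - Pi.single i (A i i)⁻¹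

lemma mulVec_invColResidual (hA : IsUnit A) :
    A *ᵥ invColResidual A i = Pi.single i 1 - (A i i)⁻¹ • A.col i := by
  have hinv : A *ᵥ A⁻¹.col i = Pi.single i 1 := by
    rw [← mulVec_single_one, mulVec_mulVec,
      mul_nonsing_inv A ((isUnit_iff_isUnit_det A).1 hA), one_mulVec]
  rw [invColResidual, mulVec_sub, hinv, mulVec_single, op_smul_eq_smul]

lemma mulVec_invColResidual_apply_self (hA : IsUnit A) (hi : A i i ≠ 0) :
    (A *ᵥ invColResidual A i) i = 0 := by
  simp [mulVec_invColResidual hA, hi]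

lemma invColResidual_eq_zero_iff (hA : IsUnit A) (hi : A i i ≠ 0) :
    invColResidual A i = 0 ↔ ∀ j ≠ i, A j i = 0 := by
  rw [← (mulVec_injective_of_isUnit hA).eq_iff, mulVec_zero]
  refine ⟨fun h j hj ↦ ?_, fun h ↦ funext fun j ↦ ?_⟩
  · simpa [mulVec_invColResidual hA, hj, hi] using congrFun h j
  · obtain rfl | hj := eq_or_ne j i
    · exact mulVec_invColResidual_apply_self hA hi
    · simp [mulVec_invColResidual hA, hj, h j hj]

lemma star_invColResidual_dotProduct_mulVec [StarRing K] (hA : A.IsHermitian) (hu : IsUnit A)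
    (hi : A i i ≠ 0) :
    star (invColResidual A i) ⬝ᵥ A *ᵥ invColResidual A i = A⁻¹ i i - (A i i)⁻¹ := by
  set v := invColResidual A i with hv
  have hcol : star (A⁻¹.col i) = A⁻¹.row i := funext fun j ↦ hA.inv.apply i j
  calc star v ⬝ᵥ A *ᵥ v = A⁻¹.row i ⬝ᵥ A *ᵥ v - star (Pi.single i (A i i)⁻¹) ⬝ᵥ A *ᵥ v := by
        rw [← hcol, ← sub_dotProduct, ← star_sub, hv, invColResidual]
    _ = (A⁻¹ *ᵥ A *ᵥ v) i := by
        rw [Pi.star_single, single_dotProduct, mulVec_invColResidual_apply_self hu hi, mul_zero,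
          sub_zero]
        rfl
    _ = v i := by
        rw [mulVec_mulVec, nonsing_inv_mul A ((isUnit_iff_isUnit_det A).1 hu), one_mulVec]
    _ = A⁻¹ i i - (A i i)⁻¹ := by simp [hv, invColResidual]

end InvColResidual

section PosDef

variable {n K : Type*} [Fintype n] [DecidableEq n] [Field K] [PartialOrder K]
  [StarRing K] {A : Matrix n n K}

lemma inv_diag_le_diag_inv [IsOrderedAddMonoid K] (hA : A.PosDef) (i : n) :
    (A i i)⁻¹ ≤ A⁻¹ i i := by
  rw [← sub_nonneg,
    ← star_invColResidual_dotProduct_mulVec hA.isHermitian hA.isUnit hA.diag_pos.ne']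
  exact hA.posSemidef.dotProduct_mulVec_nonneg _

lemma inv_diag_eq_diag_inv_iff (hA : A.PosDef) (i : n) :
    (A i i)⁻¹ = A⁻¹ i i ↔ ∀ j ≠ i, A j i = 0 := by
  have hi : A i i ≠ 0 := hA.diag_pos.ne'
  rw [← invColResidual_eq_zero_iff hA.isUnit hi, eq_comm, ← sub_eq_zero,
    ← star_invColResidual_dotProduct_mulVec hA.isHermitian hA.isUnit hi]
  refine ⟨fun h ↦ ?_, fun h ↦ by rw [h, mulVec_zero, dotProduct_zero]⟩
  by_contra hv
  exact (hA.dotProduct_mulVec_pos hv).ne' h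

theorem trace_inv_ge_sum_inv_diag_general [IsOrderedAddMonoid K] (hA : A.PosDef) :
    (∀ i, 0 < A i i) ∧
    ∑ i, (A i i)⁻¹ ≤ A⁻¹.trace ∧
    (A⁻¹.trace = ∑ i, (A i i)⁻¹ ↔ A.IsDiag) := by
  have hle : ∀ i ∈ Finset.univ, (A i i)⁻¹ ≤ A⁻¹ i i := fun i _ ↦ inv_diag_le_diag_inv hA i
  refine ⟨fun _ ↦ hA.diag_pos, Finset.sum_le_sum hle, ?_⟩
  calc A⁻¹.trace = ∑ i, (A i i)⁻¹ ↔ ∀ i ∈ Finset.univ, (A i i)⁻¹ = A⁻¹ i i := by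
        rw [eq_comm]
        exact Finset.sum_eq_sum_iff_of_le hle
    _ ↔ ∀ i, ∀ j ≠ i, A j i = 0 := by
        simp only [Finset.mem_univ, true_imp_iff, inv_diag_eq_diag_inv_iff hA]
    _ ↔ A.IsDiag := forall_comm

end PosDef

lemma eq_ofReal_iff_re_eq_of_ofReal_le {r : ℝ} {z : ℂ} (h : (r : ℂ) ≤ z) : z = r ↔ z.re = r := by
  simp [Complex.ext_iff, ← (Complex.le_def.1 h).2]

lemma ofReal_sum_inv_re {ι : Type*} {s : Finset ι} {f : ι → ℂ} (hf : ∀ i ∈ s, (f i).im = 0) :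
    ((∑ i ∈ s, (f i).re⁻¹ : ℝ) : ℂ) = ∑ i ∈ s, (f i)⁻¹ := by
  push_cast
  exact Finset.sum_congr rfl fun i hi ↦ by rw [Complex.ext (Complex.ofReal_re _) (hf i hi).symm]

/-- **Inequality (diag_fact).**  For a Hermitian positive-definite `A ∈ ℂ^{n×n}`, the
diagonal entries are positive reals, `Tr(A⁻¹) ≥ Σᵢ (Aᵢᵢ)⁻¹`, and equality holds if and
only if `A` is diagonal. -/
theorem trace_inv_ge_sum_inv_diag {n : ℕ}
    (A : Matrix (Fin n) (Fin n) ℂ) (hA : A.PosDef) :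
    (∀ i, (A i i).im = 0 ∧ 0 < (A i i).re) ∧
    (∑ i, ((A i i).re)⁻¹ ≤ (A⁻¹).trace.re) ∧
    ((A⁻¹).trace.re = ∑ i, ((A i i).re)⁻¹ ↔ A.IsDiag) := by
  obtain ⟨hpos, hle, heq⟩ := trace_inv_ge_sum_inv_diag_general hA
  have him (i : Fin n) : (A i i).im = 0 := (Complex.pos_iff.1 (hpos i)).2.symm
  rw [← ofReal_sum_inv_re fun i _ ↦ him i] at hle heq
  exact ⟨fun i ↦ ⟨him i, (Complex.pos_iff.1 (hpos i)).1⟩, (Complex.le_def.1 hle).1,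
    (eq_ofReal_iff_re_eq_of_ofReal_le hle).symm.trans heq⟩
end

section
/- Let Λ ∈ ℂ^{n×n} be a diagonal matrix with positive real diagonal entries λ_1,…,λ_n, and let G ∈ ℂ^{n×n} be a Hermitian positive-semidefinite matrix. Then Λ⁻¹ + G is Hermitian positive definite and Tr((Λ⁻¹ + G)⁻¹) ≥ Σ_{i=1}^{n} (λ_i⁻¹ + G_{ii})⁻¹, where each G_{ii} is a nonnegative real. Equality holds if and only if G is a diagonal matrix. -/
open Matrix ComplexOrder

/-!
For a positive definite `M`, completing the square gives
`(M⁻¹ x - y)ᴴ M (M⁻¹ x - y) = xᴴ M⁻¹ x - xᴴ y - yᴴ x + yᴴ M y`. With `x = eᵢ` and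
`y = (Mᵢᵢ)⁻¹ eᵢ` the right-hand side is `(M⁻¹)ᵢᵢ - (Mᵢᵢ)⁻¹`, which is therefore nonnegative, and it
vanishes exactly when `M eᵢ` is proportional to `eᵢ`. Summing over `i` bounds the trace, with
equality when every column of `M` vanishes off the diagonal.
-/

section

variable {ι R K : Type*}

theorem isDiag_diagonal_add_iff [AddZeroClass R] [DecidableEq ι] (d : ι → R)
    (A : Matrix ι ι R) : (diagonal d + A).IsDiag ↔ A.IsDiag :=
  forall₃_congr fun i j hij => by simp [diagonal_apply_ne d hij]

variable [Fintype ι]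

theorem star_dotProduct_mulVec_eq_zero_iff [Ring R] [PartialOrder R] [StarRing R]
    {M : Matrix ι ι R} (hM : M.PosDef) {x : ι → R} : star x ⬝ᵥ M *ᵥ x = 0 ↔ x = 0 := by
  refine ⟨fun h => ?_, fun h => by rw [h, mulVec_zero, dotProduct_zero]⟩
  by_contra hx
  exact (hM.dotProduct_mulVec_pos hx).ne' h

variable [DecidableEq ι] [Field K] {M : Matrix ι ι K}

theorem inv_diagonal_of_ne_zero {d : ι → K} (hd : ∀ i, d i ≠ 0) :
    (diagonal d)⁻¹ = diagonal fun i => (d i)⁻¹ :=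
  inv_eq_right_inv <| by simp [diagonal_mul_diagonal, hd]

theorem inv_mulVec_single_one_eq_iff (hunit : IsUnit M) {i : ι} (hi : M i i ≠ 0) :
    M⁻¹ *ᵥ Pi.single i 1 = Pi.single i (M i i)⁻¹ ↔ ∀ j ≠ i, M j i = 0 := by
  have hdet : IsUnit M.det := (isUnit_iff_isUnit_det M).mp hunit
  rw [← (mulVec_injective_of_isUnit hunit).eq_iff, mulVec_mulVec, mul_nonsing_inv _ hdet,
    one_mulVec, funext_iff]
  refine forall_congr' fun j => ?_
  obtain rfl | hj := eq_or_ne j i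
  · simp [hi]
  · simp [hj, hi]

theorem star_inv_mulVec_sub_dotProduct_mulVec [CommRing R] [StarRing R]
    {M : Matrix ι ι R} (hM : M.IsHermitian) (hunit : IsUnit M) (x y : ι → R) :
    star (M⁻¹ *ᵥ x - y) ⬝ᵥ M *ᵥ (M⁻¹ *ᵥ x - y) =
      star x ⬝ᵥ M⁻¹ *ᵥ x - star x ⬝ᵥ y - star y ⬝ᵥ x + star y ⬝ᵥ M *ᵥ y := by
  have hdet : IsUnit M.det := (isUnit_iff_isUnit_det M).mp hunit
  have hcancel : M *ᵥ (M⁻¹ *ᵥ x - y) = x - M *ᵥ y := by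
    rw [mulVec_sub, mulVec_mulVec, mul_nonsing_inv _ hdet, one_mulVec]
  have hadjoint (z : ι → R) : star (M⁻¹ *ᵥ x) ⬝ᵥ z = star x ⬝ᵥ M⁻¹ *ᵥ z := by
    rw [star_mulVec, hM.inv.eq, ← dotProduct_mulVec]
  rw [hcancel, star_sub, sub_dotProduct, hadjoint, mulVec_sub, mulVec_mulVec,
    nonsing_inv_mul _ hdet, one_mulVec, dotProduct_sub, dotProduct_sub]
  abel

variable [StarRing K]

theorem diag_inv_sub_inv_diag (hM : M.IsHermitian) (hunit : IsUnit M) {i : ι} (hi : M i i ≠ 0) :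
    M⁻¹ i i - (M i i)⁻¹ =
      star (M⁻¹ *ᵥ Pi.single i 1 - Pi.single i (M i i)⁻¹) ⬝ᵥ
        M *ᵥ (M⁻¹ *ᵥ Pi.single i 1 - Pi.single i (M i i)⁻¹) := by
  rw [star_inv_mulVec_sub_dotProduct_mulVec hM hunit]
  simp [hM.apply, hi]

variable [PartialOrder K]

theorem inv_diag_eq_diag_inv_iff_s5 (hM : M.PosDef) (i : ι) :
    (M i i)⁻¹ = M⁻¹ i i ↔ ∀ j ≠ i, M j i = 0 := by
  have hi : M i i ≠ 0 := hM.diag_pos.ne'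
  rw [eq_comm, ← sub_eq_zero, diag_inv_sub_inv_diag hM.isHermitian hM.isUnit hi,
    star_dotProduct_mulVec_eq_zero_iff hM, sub_eq_zero, inv_mulVec_single_one_eq_iff hM.isUnit hi]

variable [IsOrderedAddMonoid K]

theorem inv_diag_le_diag_inv_s5 (hM : M.PosDef) (i : ι) : (M i i)⁻¹ ≤ M⁻¹ i i := by
  rw [← sub_nonneg, diag_inv_sub_inv_diag hM.isHermitian hM.isUnit hM.diag_pos.ne']
  exact hM.posSemidef.dotProduct_mulVec_nonneg _

theorem sum_inv_diag_le_trace_inv (hM : M.PosDef) : ∑ i, (M i i)⁻¹ ≤ M⁻¹.trace :=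
  Finset.sum_le_sum fun i _ => inv_diag_le_diag_inv_s5 hM i

theorem sum_inv_diag_eq_trace_inv_iff (hM : M.PosDef) :
    ∑ i, (M i i)⁻¹ = M⁻¹.trace ↔ M.IsDiag := by
  simp only [trace, diag_apply, Finset.sum_eq_sum_iff_of_le fun i _ => inv_diag_le_diag_inv_s5 hM i,
    Finset.mem_univ, forall_const, inv_diag_eq_diag_inv_iff_s5 hM]
  exact forall_comm

end

theorem trace_inv_lower_bound_general {ι 𝕜 : Type*} [Fintype ι] [DecidableEq ι] [RCLike 𝕜]
    (lam : ι → ℝ) (hlam : ∀ i, 0 < lam i) {G : Matrix ι ι 𝕜} (hG : G.PosSemidef) :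
    ((diagonal fun i => (lam i : 𝕜))⁻¹ + G).PosDef ∧
    (∀ i, RCLike.im (G i i) = 0 ∧ 0 ≤ RCLike.re (G i i)) ∧
    (∑ i, ((lam i)⁻¹ + RCLike.re (G i i))⁻¹ ≤
      RCLike.re ((diagonal fun i => (lam i : 𝕜))⁻¹ + G)⁻¹.trace) ∧
    (RCLike.re ((diagonal fun i => (lam i : 𝕜))⁻¹ + G)⁻¹.trace =
      ∑ i, ((lam i)⁻¹ + RCLike.re (G i i))⁻¹ ↔ G.IsDiag) := by
  have hpos : ((diagonal fun i => (lam i : 𝕜))⁻¹ + G).PosDef :=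
    (PosDef.diagonal fun i => RCLike.ofReal_pos.mpr (hlam i)).inv.add_posSemidef hG
  rw [inv_diagonal_of_ne_zero fun i => RCLike.ofReal_ne_zero.mpr (hlam i).ne'] at hpos ⊢
  set M := (diagonal fun i => (lam i : 𝕜)⁻¹) + G with hM
  have hsum : ((∑ i, ((lam i)⁻¹ + RCLike.re (G i i))⁻¹ : ℝ) : 𝕜) = ∑ i, (M i i)⁻¹ := by
    simp [hM, hG.isHermitian.coe_re_apply_self]
  have htrace : (RCLike.re M⁻¹.trace : 𝕜) = M⁻¹.trace := by
    simp [trace, hpos.inv.isHermitian.coe_re_apply_self]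
  refine ⟨hpos, fun i => (RCLike.nonneg_iff.mp hG.diag_nonneg).symm, ?_, ?_⟩
  · rw [← RCLike.ofReal_le_ofReal (K := 𝕜), hsum, htrace]
    exact sum_inv_diag_le_trace_inv hpos
  · rw [← RCLike.ofReal_inj (K := 𝕜), hsum, htrace, eq_comm, sum_inv_diag_eq_trace_inv_iff hpos]
    exact isDiag_diagonal_add_iff _ G

/-- **Lower bound (eq. (J_MMSE_FD_opt_lowerbound)).**  For a diagonal `Λ` with positive
real diagonal entries `λᵢ` and a Hermitian positive-semidefinite `G`, the matrix
`Λ⁻¹ + G` is Hermitian positive definite, its diagonal data satisfy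
`Tr((Λ⁻¹+G)⁻¹) ≥ Σᵢ (λᵢ⁻¹ + Gᵢᵢ)⁻¹` (each `Gᵢᵢ` a nonnegative real), and equality holds
if and only if `G` is diagonal. -/
theorem trace_inv_lower_bound {n : ℕ} (lam : Fin n → ℝ) (hlam : ∀ i, 0 < lam i)
    (G : Matrix (Fin n) (Fin n) ℂ) (hG : G.PosSemidef) :
    ((Matrix.diagonal fun i => (lam i : ℂ))⁻¹ + G).PosDef ∧
    (∀ i, (G i i).im = 0 ∧ 0 ≤ (G i i).re) ∧
    (∑ i, ((lam i)⁻¹ + (G i i).re)⁻¹ ≤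
      (((Matrix.diagonal fun i => (lam i : ℂ))⁻¹ + G)⁻¹).trace.re) ∧
    ((((Matrix.diagonal fun i => (lam i : ℂ))⁻¹ + G)⁻¹).trace.re =
        ∑ i, ((lam i)⁻¹ + (G i i).re)⁻¹ ↔ G.IsDiag) := by
  exact trace_inv_lower_bound_general lam hlam hG
end
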